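/- Let (N, B, L) be a Hadamard triple in ℝ with #B < N, and let μ_{N,B} be the self-similar measure associated with (N,B), i.e., the unique Borel probability measure μ on ℝ satisfying μ = (1/#B) ∑_{b∈B} μ ∘ τ_b^{-1} where τ_b(x) = (x+b)/N. Then every rational number t of the form t = v/u with u, v ∈ ℕ, gcd(u,v) = 1, and gcd(uv, N) = 1 is a spectral eigenvalue of μ_{N,B}; that is, there exists Λ ⊂ ℝ such that both Λ and t·Λ are spectra of μ_{N,B}. -/

import Mathlib

open MeasureTheory ENNReal

/-- `(N,B,L)` is a Hadamard triple in `ℝ`. -/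
def IsHadamardTriple (N : ℕ) (B L : Finset ℤ) : Prop :=
  2 ≤ N ∧ 2 ≤ B.card ∧ B.card = L.card ∧
    ∀ l ∈ L, ∀ l' ∈ L, l ≠ l' →
      ∑ b ∈ B, Complex.exp (2 * Real.pi * Complex.I * (b : ℂ) * ((l : ℂ) - (l' : ℂ)) / (N : ℂ)) = 0

/-- The exponential function `e_λ(x) = e^{2πiλx}`. -/
noncomputable def expFun (l : ℝ) : ℝ → ℂ :=
  fun x => Complex.exp (2 * Real.pi * Complex.I * (l : ℂ) * (x : ℂ))

/-- `Λ` is a spectrum of `μ`: the family `{e^{2πiλx} : λ ∈ Λ}` forms an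
orthonormal basis of `L²(μ)`. -/
def IsSpectrum (μ : Measure ℝ) (Λ : Set ℝ) : Prop :=
  ∃ F : Λ → Lp ℂ 2 μ,
    (∀ l : Λ, (F l : ℝ → ℂ) =ᵐ[μ] expFun (l : ℝ)) ∧
    Orthonormal ℂ F ∧
    (Submodule.span ℂ (Set.range F)).topologicalClosure = ⊤

/-!
For every finite set `W` of integers coprime to `N` there is a single `Γ ⊆ ℤ` all of whose dilates
`w • Γ`, `w ∈ W`, are spectra of `μ`; the theorem is the case `W = {u, v}`.

The set `Γ` is an increasing union of finite sets `G k` such that `w • G k` is a spectrum of the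
`n k`-th discrete approximation of `μ`. Galois conjugation shows that the vanishing of the mask
polynomial at `c / N ^ k` is invariant under multiplication by `w`, so the same digits serve every
`w`. By dominated convergence and the Jorgensen–Pedersen criterion, the dilates of `Γ` are spectra
of `μ` as soon as the Fourier transform of `μ` is uniformly bounded below near the points
`w g / N ^ n k`, `g ∈ G k`.

To arrange this, note that the digits of a new block matter only modulo `N ^ m`. As `#B < N`, the
pigeonhole principle yields, for large `m`, a translate of a digit set with at most `(#B) ^ m`
elements which avoids the finitely many zeros of the functions `μ̂ (w ·)` in `[0, 1]`, and
compactness makes the lower bound uniform. Near `0` the digit `0` has to be kept for the sets `G k`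
to increase; there the digits can be chosen because no `a / N ^ i` lies in the integral periodic
zero set of `μ̂`, which is finite modulo `ℤ` and stable under multiplication by `N`.
-/

section Exponentials

lemma continuous_expFun (l : ℝ) : Continuous (expFun l) := by
  unfold expFun
  fun_prop

lemma norm_expFun (l x : ℝ) : ‖expFun l x‖ = 1 := by
  simp [expFun, Complex.norm_exp]

lemma expFun_add (l m x : ℝ) : expFun (l + m) x = expFun l x * expFun m x := by
  simp only [expFun, ← Complex.exp_add]
  push_cast
  ring_nf

lemma expFun_apply_add (l x y : ℝ) : expFun l (x + y) = expFun l x * expFun l y := by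
  simp only [expFun, ← Complex.exp_add]
  push_cast
  ring_nf

lemma expFun_mul_left (l m x : ℝ) : expFun (l * m) x = expFun l (m * x) := by
  simp [expFun, mul_assoc]

lemma conj_expFun (l x : ℝ) : (starRingEnd ℂ) (expFun l x) = expFun (-l) x := by
  simp only [expFun, ← Complex.exp_conj, map_mul, Complex.conj_ofReal, Complex.conj_I, map_ofNat]
  push_cast
  ring_nf

lemma expFun_intCast_mul (b : ℤ) (l x : ℝ) : expFun b (l * x) = expFun l x ^ b := by
  simp only [expFun, ← Complex.exp_int_mul]
  push_cast
  ring_nf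

lemma expFun_intCast_intCast (b j : ℤ) : expFun b j = 1 :=
  Complex.exp_eq_one_iff.mpr ⟨b * j, by push_cast; ring⟩

lemma memLp_expFun (μ : Measure ℝ) [IsFiniteMeasure μ] (p : ℝ≥0∞) (l : ℝ) :
    MemLp (expFun l) p μ :=
  .of_bound (continuous_expFun l).aestronglyMeasurable 1 (.of_forall fun x => (norm_expFun l x).le)

lemma integrable_mul_expFun {μ : Measure ℝ} {f : ℝ → ℂ} (hf : Integrable f μ) (l : ℝ) :
    Integrable (fun x => f x * expFun l x) μ :=
  hf.mul_bdd (c := 1) (continuous_expFun l).aestronglyMeasurable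
    (.of_forall fun x => (norm_expFun l x).le)

end Exponentials

section Galois

lemma zpow_emod_toNat {G₀ : Type*} [GroupWithZero G₀] {z : G₀} {n : ℕ} (hn : n ≠ 0)
    (hz : z ^ n = 1) (b : ℤ) : z ^ (b % n).toNat = z ^ b := by
  have hz0 : z ≠ 0 := by
    rintro rfl
    simp [hn] at hz
  rw [← zpow_natCast, Int.toNat_of_nonneg (Int.emod_nonneg b (by exact_mod_cast hn))]
  nth_rw 2 [← Int.emod_add_mul_ediv b n]
  rw [zpow_add₀ hz0, zpow_mul, zpow_natCast z n, hz, one_zpow, mul_one]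

-- `ζ` and `ζ ^ w` are roots of the same cyclotomic polynomial.
lemma sum_zpow_zpow_eq_zero {K : Type*} [Field K] [CharZero K] {ζ : K} {n : ℕ} (hn : n ≠ 0)
    (hζ : ζ ^ n = 1) {w : ℤ} (hw : IsCoprime w n) {B : Finset ℤ} (h : ∑ b ∈ B, ζ ^ b = 0) :
    ∑ b ∈ B, (ζ ^ w) ^ b = 0 := by
  have hord : 0 < orderOf ζ := orderOf_pos_iff.mpr (isOfFinOrder_iff_pow_eq_one.mpr
    ⟨n, Nat.pos_of_ne_zero hn, hζ⟩)
  set k := (w % n).toNat with hk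
  have hkn : k.Coprime n := by
    rw [← Nat.isCoprime_iff_coprime, hk,
      Int.toNat_of_nonneg (Int.emod_nonneg w (by exact_mod_cast hn))]
    rw [← Int.emod_add_mul_ediv w n] at hw
    exact hw.of_add_mul_left_left
  let p : Polynomial ℤ := ∑ b ∈ B, Polynomial.X ^ (b % n).toNat
  have hp (r : ℕ) : Polynomial.aeval (ζ ^ r) p = ∑ b ∈ B, (ζ ^ r) ^ b := by
    simp [p, zpow_emod_toNat hn (show (ζ ^ r) ^ n = 1 by rw [pow_right_comm, hζ, one_pow])]
  have hroot : Polynomial.aeval ζ p = 0 := by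
    simpa only [pow_one, h] using hp 1
  have hminpoly : Polynomial.aeval (ζ ^ k) (minpoly ℤ ζ) = 0 := by
    rw [Polynomial.aeval_def, ← Polynomial.eval_map]
    exact (IsPrimitiveRoot.orderOf ζ).pow_isRoot_minpoly
      (hkn.coprime_dvd_right (orderOf_dvd_of_pow_eq_one hζ))
  obtain ⟨q, hq⟩ := minpoly.isIntegrallyClosed_dvd
    ((IsPrimitiveRoot.orderOf ζ).isIntegral hord) hroot
  rw [← zpow_emod_toNat hn hζ w, ← hp, hq, map_mul, hminpoly, zero_mul]

end Galois

section Mask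

variable {N : ℕ} {B : Finset ℤ}

/-- The mask polynomial `M_B`, i.e. the Fourier transform of the uniform probability measure
on the digit set `B`. -/
noncomputable def mask (B : Finset ℤ) (x : ℝ) : ℂ :=
  (B.card : ℂ)⁻¹ * ∑ b ∈ B, expFun b x

/-- The product `∏_{k = 1}^{n} M_B(x / N ^ k)`, i.e. the Fourier transform of the `n`-th discrete
approximation of the self-similar measure `μ_{N,B}`. -/
noncomputable def maskProd (N : ℕ) (B : Finset ℤ) (n : ℕ) (x : ℝ) : ℂ :=
  ∏ k ∈ Finset.range n, mask B (x / (N : ℝ) ^ (k + 1))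

lemma mask_add_intCast (x : ℝ) (j : ℤ) : mask B (x + j) = mask B x := by
  simp [mask, expFun_apply_add, expFun_intCast_intCast]

lemma mask_zero (hB : B.Nonempty) : mask B 0 = 1 := by
  simp [mask, expFun, hB.card_ne_zero]

lemma mask_eq_zero_iff (x : ℝ) : mask B x = 0 ↔ ∑ b ∈ B, expFun b x = 0 := by
  rw [mask, mul_eq_zero, inv_eq_zero, Nat.cast_eq_zero, Finset.card_eq_zero, or_iff_right_iff_imp]
  rintro rfl
  rfl

lemma mask_mul_eq_zero {n : ℕ} (hn : n ≠ 0) {w : ℤ} (hw : IsCoprime w n) {c : ℤ}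
    (h : mask B (c / n) = 0) : mask B (w * (c / n)) = 0 := by
  have hsum (x : ℝ) : ∑ b ∈ B, expFun b x = ∑ b ∈ B, expFun x 1 ^ b := by
    simp [← expFun_intCast_mul]
  have hroot : expFun (c / n : ℝ) 1 ^ n = 1 := by
    rw [← zpow_natCast, ← expFun_intCast_mul]
    exact Complex.exp_eq_one_iff.mpr ⟨c, by push_cast; field_simp⟩
  have hpow : expFun (w * (c / n) : ℝ) 1 = expFun (c / n : ℝ) 1 ^ w := by
    rw [expFun_mul_left, expFun_intCast_mul]
  rw [mask_eq_zero_iff, hsum] at h ⊢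
  rw [hpow]
  exact sum_zpow_zpow_eq_zero hn hroot hw h

lemma mask_mul_eq_zero_iff {n : ℕ} (hn : n ≠ 0) {w : ℤ} (hw : IsCoprime w n) (c : ℤ) :
    mask B (w * (c / n)) = 0 ↔ mask B (c / n) = 0 := by
  refine ⟨fun h => ?_, mask_mul_eq_zero hn hw⟩
  obtain ⟨s, r, hsr⟩ := hw
  have hs : IsCoprime s n := ⟨w, r, by rw [← hsr]; ring⟩
  have hw : (w * (c / n) : ℝ) = ((w * c : ℤ) : ℝ) / n := by push_cast; ring
  have hc : (c / n : ℝ) = s * (((w * c : ℤ) : ℝ) / n) + (r * c : ℤ) := by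
    have hsr' : (s * w + r * n : ℝ) = 1 := by exact_mod_cast hsr
    push_cast
    field_simp
    linear_combination (-c : ℝ) * hsr'
  rw [hc, mask_add_intCast]
  exact mask_mul_eq_zero hn hs (hw ▸ h)

lemma maskProd_zero (n : ℕ) (hB : B.Nonempty) : maskProd N B n 0 = 1 := by
  simp [maskProd, mask_zero hB]

lemma maskProd_one (x : ℝ) : maskProd N B 1 x = mask B (x / N) := by
  simp [maskProd]

lemma maskProd_add (n m : ℕ) (x : ℝ) :
    maskProd N B (n + m) x = maskProd N B n x * maskProd N B m (x / (N : ℝ) ^ n) := by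
  simp only [maskProd, Finset.prod_range_add, div_div, ← pow_add, add_assoc]

lemma maskProd_add_pow_mul (hN : N ≠ 0) (n : ℕ) (x : ℝ) (j : ℤ) :
    maskProd N B n (x + (N : ℝ) ^ n * j) = maskProd N B n x := by
  refine Finset.prod_congr rfl fun k hk => ?_
  obtain ⟨r, rfl⟩ := Nat.exists_eq_add_of_le (Nat.succ_le_of_lt (Finset.mem_range.mp hk))
  rw [← mask_add_intCast (x / (N : ℝ) ^ (k + 1)) (N ^ r * j)]
  congr 1
  push_cast
  rw [pow_add (N : ℝ) (k + 1) r]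
  field_simp

lemma analyticOnNhd_mask : AnalyticOnNhd ℝ (mask B) Set.univ := by
  intro x _
  unfold mask expFun
  refine analyticAt_const.mul (Finset.analyticAt_fun_sum _ fun b _ => ?_)
  exact (analyticAt_cexp.restrictScalars (𝕜 := ℝ)).comp
    (analyticAt_const.mul (Complex.ofRealCLM.analyticAt x))

lemma analyticOnNhd_maskProd (n : ℕ) : AnalyticOnNhd ℝ (maskProd N B n) Set.univ := by
  intro x _
  unfold maskProd
  refine Finset.analyticAt_fun_prod _ fun k _ => ?_
  exact (analyticOnNhd_mask _ trivial).comp (analyticAt_id.div_const)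

end Mask

section ExpVec

/-- The unit vector `(#B)^{-1/2} (e^{2πibx})_{b ∈ B}` of `ℂ^B`; the matrix of a Hadamard triple
`(N, B, L)` has the vectors `expVec B (l / N)`, `l ∈ L`, as its columns. -/
noncomputable def expVec (B : Finset ℤ) (x : ℝ) : EuclideanSpace ℂ B :=
  WithLp.toLp 2 fun b => ((√B.card)⁻¹ : ℝ) * expFun (b : ℤ) x

lemma inner_expVec {B : Finset ℤ} (x y : ℝ) :
    inner ℂ (expVec B x) (expVec B y) = mask B (y - x) := by
  have hB : (B.card : ℂ)⁻¹ = ((√B.card)⁻¹ : ℝ) * ((√B.card)⁻¹ : ℝ) := by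
    rw [← Complex.ofReal_mul, ← mul_inv, Real.mul_self_sqrt (Nat.cast_nonneg _)]
    simp
  rw [mask, hB, Finset.mul_sum, ← Finset.sum_coe_sort B, PiLp.inner_apply]
  refine Finset.sum_congr rfl fun b _ => ?_
  rw [expVec, expVec, RCLike.inner_apply, map_mul, conj_expFun, Complex.conj_ofReal,
    sub_eq_add_neg, expFun_apply_add, ← mul_neg_one (b : ℝ), expFun_mul_left, neg_one_mul]
  ring

lemma sum_norm_sq_mask_eq_one {ι : Type*} {B : Finset ℤ} (hB : B.Nonempty) {s : Finset ι}
    (hcard : s.card = B.card) {θ : ι → ℝ}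
    (hθ : ∀ i ∈ s, ∀ j ∈ s, i ≠ j → mask B (θ i - θ j) = 0) (x : ℝ) :
    ∑ i ∈ s, ‖mask B (x + θ i)‖ ^ 2 = 1 := by
  have : Nonempty s := (Finset.card_pos.mp (hcard ▸ hB.card_pos)).to_subtype
  have hunit (y : ℝ) : ‖expVec B y‖ = 1 := by
    rw [@norm_eq_sqrt_re_inner ℂ, inner_expVec, sub_self, mask_zero hB]
    simp
  have horth : Orthonormal ℂ fun i : s => expVec B (θ i) := by
    refine ⟨fun i => hunit _, fun i j hij => (inner_expVec _ _).trans ?_⟩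
    exact hθ j j.2 i i.2 fun h => hij (Subtype.ext h.symm)
  have hspan : Submodule.span ℂ (Set.range fun i : s => expVec B (θ i)) = ⊤ := by
    rw [← coe_basisOfOrthonormalOfCardEqFinrank horth (by simp [hcard])]
    exact Module.Basis.span_eq _
  have hparseval := (OrthonormalBasis.mk horth hspan.ge).sum_sq_norm_inner_left (expVec B (-x))
  simp only [OrthonormalBasis.coe_mk, inner_expVec, hunit, sub_neg_eq_add] at hparseval
  rw [← Finset.sum_coe_sort s]
  simpa only [add_comm x, one_pow] using hparseval

end ExpVec

section LevelSpectra

variable {N : ℕ} {B L : Finset ℤ}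

/-- `w • D` is a spectrum of the `n`-th discrete approximation of `μ_{N,B}`, expressed through
Parseval's identity for the exponentials. -/
def IsLevelSpectrum (N : ℕ) (B : Finset ℤ) (w : ℤ) (n : ℕ) (D : Finset ℤ) : Prop :=
  ∀ ξ : ℝ, ∑ d ∈ D, ‖maskProd N B n (ξ + w * d)‖ ^ 2 = 1

/-- The digit expansions `g + N ^ n * d` with leading part `g ∈ G` and next digit `d ∈ D g`. -/
def extendDigits (N n : ℕ) (G : Finset ℤ) (D : ℤ → Finset ℤ) : Finset ℤ :=
  G.biUnion fun g => (D g).image fun d => g + (N : ℤ) ^ n * d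

lemma mem_extendDigits {n : ℕ} {G : Finset ℤ} {D : ℤ → Finset ℤ} {x : ℤ} :
    x ∈ extendDigits N n G D ↔ ∃ g ∈ G, ∃ d ∈ D g, g + (N : ℤ) ^ n * d = x := by
  simp [extendDigits]

lemma card_extendDigits_le (n : ℕ) (G : Finset ℤ) {D : ℤ → Finset ℤ} {c : ℕ}
    (hD : ∀ g ∈ G, (D g).card ≤ c) : (extendDigits N n G D).card ≤ G.card * c :=
  Finset.card_biUnion_le_card_mul _ _ _ fun g hg => Finset.card_image_le.trans (hD g hg)

namespace IsLevelSpectrum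

variable {w : ℤ} {n m : ℕ} {D G : Finset ℤ}

lemma singleton (t : ℤ) : IsLevelSpectrum N B w 0 {t} := by
  simp [IsLevelSpectrum, maskProd]

lemma maskProd_eq_zero (hB : B.Nonempty) (h : IsLevelSpectrum N B w n D) {d d' : ℤ} (hd : d ∈ D)
    (hd' : d' ∈ D) (hne : d ≠ d') : maskProd N B n (w * (d - d')) = 0 := by
  have hsum := h (-(w * d'))
  rw [← Finset.add_sum_erase _ _ hd', neg_add_cancel, maskProd_zero n hB, norm_one, one_pow,
    add_eq_left, Finset.sum_eq_zero_iff_of_nonneg fun _ _ => by positivity] at hsum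
  have hterm := hsum d (Finset.mem_erase.mpr ⟨hne, hd⟩)
  rwa [neg_add_eq_sub, ← mul_sub, sq_eq_zero_iff, norm_eq_zero] at hterm

lemma pairwiseDisjoint (hN : N ≠ 0) (hB : B.Nonempty) (h : IsLevelSpectrum N B w n G)
    (D : ℤ → Finset ℤ) :
    (G : Set ℤ).PairwiseDisjoint fun g => (D g).image fun d => g + (N : ℤ) ^ n * d := by
  refine fun g hg g' hg' hne => Finset.disjoint_left.mpr fun a ha ha' => ?_
  obtain ⟨d, -, rfl⟩ := Finset.mem_image.mp ha
  obtain ⟨d', -, hd'⟩ := Finset.mem_image.mp ha'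
  have hdiff : (w : ℝ) * (g - g') = 0 + (N : ℝ) ^ n * ((w * (d' - d) : ℤ) : ℝ) := by
    have : (g' : ℝ) + (N : ℝ) ^ n * d' = g + (N : ℝ) ^ n * d := by exact_mod_cast hd'
    push_cast
    linear_combination (-w : ℝ) * this
  have hzero := h.maskProd_eq_zero hB hg hg' hne
  rw [hdiff, maskProd_add_pow_mul hN, maskProd_zero n hB] at hzero
  exact one_ne_zero hzero

lemma extend (hN : N ≠ 0) (hB : B.Nonempty) (h : IsLevelSpectrum N B w n G) {D : ℤ → Finset ℤ}
    (hD : ∀ g ∈ G, IsLevelSpectrum N B w m (D g)) :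
    IsLevelSpectrum N B w (n + m) (extendDigits N n G D) := by
  intro ξ
  have hNn : (N : ℤ) ^ n ≠ 0 := pow_ne_zero n (by exact_mod_cast hN)
  have hsplit (g d : ℤ) : ‖maskProd N B (n + m) (ξ + w * ((g + (N : ℤ) ^ n * d : ℤ) : ℝ))‖ ^ 2
      = ‖maskProd N B n (ξ + w * g)‖ ^ 2 *
        ‖maskProd N B m ((ξ + w * g) / (N : ℝ) ^ n + w * d)‖ ^ 2 := by
    have harg : ξ + w * ((g + (N : ℤ) ^ n * d : ℤ) : ℝ)
        = ξ + w * g + (N : ℝ) ^ n * ((w * d : ℤ) : ℝ) := by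
      push_cast
      ring
    rw [harg, maskProd_add, maskProd_add_pow_mul hN, norm_mul, mul_pow]
    congr 4
    push_cast
    field_simp
  rw [extendDigits, Finset.sum_biUnion (h.pairwiseDisjoint hN hB D), ← h ξ]
  refine Finset.sum_congr rfl fun g hg => ?_
  rw [Finset.sum_image fun d _ d' _ hdd => by simpa [hNn] using hdd]
  simp only [hsplit]
  rw [← Finset.mul_sum, hD g hg, mul_one]

lemma translate (hN : N ≠ 0) (hB : B.Nonempty) (h : IsLevelSpectrum N B w m D) (t : ℤ) :
    IsLevelSpectrum N B w m (extendDigits N 0 {t} fun _ => D) := by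
  simpa using (singleton t).extend hN hB fun _ _ => h

end IsLevelSpectrum

namespace IsHadamardTriple

lemma nonempty (h : IsHadamardTriple N B L) : B.Nonempty :=
  Finset.card_pos.mp (by have := h.2.1; omega)

lemma ne_zero (h : IsHadamardTriple N B L) : N ≠ 0 := by
  have := h.1
  omega

lemma mask_eq_zero (h : IsHadamardTriple N B L) {l l' : ℤ} (hl : l ∈ L) (hl' : l' ∈ L)
    (hne : l ≠ l') : mask B ((l - l' : ℤ) / N) = 0 := by
  rw [mask_eq_zero_iff, ← h.2.2.2 l hl l' hl' hne]
  refine Finset.sum_congr rfl fun b _ => ?_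
  simp only [expFun]
  push_cast
  ring_nf

lemma exists_zero_mem (h : IsHadamardTriple N B L) :
    ∃ L' : Finset ℤ, 0 ∈ L' ∧ IsHadamardTriple N B L' := by
  obtain ⟨hN, hB, hcard, horth⟩ := h
  obtain ⟨l₀, hl₀⟩ : L.Nonempty := Finset.card_pos.mp (by omega)
  refine ⟨L.image (· - l₀), Finset.mem_image.mpr ⟨l₀, hl₀, sub_self l₀⟩, hN, hB, ?_, ?_⟩
  · rw [hcard, Finset.card_image_of_injective _ sub_left_injective]
  · simp only [Finset.forall_mem_image]
    intro l hl l' hl' hne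
    simpa using horth l hl l' hl' (by rintro rfl; exact hne rfl)

lemma isLevelSpectrum (h : IsHadamardTriple N B L) {w : ℤ} (hw : IsCoprime w N) :
    IsLevelSpectrum N B w 1 L := by
  intro ξ
  have horth : ∀ l ∈ L, ∀ l' ∈ L, l ≠ l' →
      mask B (w * (l / N : ℝ) - w * (l' / N : ℝ)) = 0 := by
    intro l hl l' hl' hne
    rw [← mul_sub, ← sub_div]
    exact_mod_cast mask_mul_eq_zero h.ne_zero hw (h.mask_eq_zero hl hl' hne)
  rw [← sum_norm_sq_mask_eq_one h.nonempty h.2.2.1.symm horth (ξ / N)]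
  simp only [maskProd_one, add_div, mul_div_assoc]

lemma exists_isLevelSpectrum (h : IsHadamardTriple N B L) (m : ℕ) :
    ∃ D : Finset ℤ, 0 ∈ D ∧ D.card ≤ B.card ^ m ∧
      ∀ w : ℤ, IsCoprime w N → IsLevelSpectrum N B w m D := by
  induction m with
  | zero => exact ⟨{0}, by simp, by simp, fun w _ => .singleton 0⟩
  | succ m ih =>
    obtain ⟨D, h0, hcard, hD⟩ := ih
    obtain ⟨L', hL'0, hL'⟩ := h.exists_zero_mem
    refine ⟨extendDigits N m D fun _ => L', ?_, ?_, fun w hw =>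
      (hD w hw).extend h.ne_zero h.nonempty fun _ _ => hL'.isLevelSpectrum hw⟩
    · exact mem_extendDigits.mpr ⟨0, h0, 0, hL'0, by simp⟩
    · refine (card_extendDigits_le m D fun _ _ => hL'.2.2.1.ge).trans ?_
      rw [pow_succ]
      exact Nat.mul_le_mul_right _ hcard

end IsHadamardTriple

end LevelSpectra

section FourierTransform

open Filter Topology

/-- The Fourier transform `ξ ↦ ∫ e^{2πiξt} dμ(t)` of a measure on `ℝ`. -/
noncomputable def measureFourier (μ : Measure ℝ) (ξ : ℝ) : ℂ :=
  ∫ t, expFun ξ t ∂μ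

/-- `μ` satisfies the self-similarity equation of `μ_{N,B}`: it is the average of its images under
the maps `x ↦ (x + b) / N`, `b ∈ B`. -/
def IsSelfSimilar (N : ℕ) (B : Finset ℤ) (μ : Measure ℝ) : Prop :=
  μ = (B.card : ℝ≥0∞)⁻¹ • ∑ b ∈ B, μ.map fun x => (x + (b : ℝ)) / (N : ℝ)

variable {N : ℕ} {B : Finset ℤ} {μ : Measure ℝ}

lemma continuous_measureFourier [IsFiniteMeasure μ] : Continuous (measureFourier μ) := by
  refine continuous_of_dominated (bound := fun _ => 1)
    (fun ξ => (continuous_expFun ξ).aestronglyMeasurable)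
    (fun ξ => .of_forall fun t => (norm_expFun ξ t).le) (integrable_const _)
    (.of_forall fun t => ?_)
  unfold expFun
  fun_prop

lemma IsSelfSimilar.measureFourier_eq_mask_mul [IsFiniteMeasure μ]
    (hμ : IsSelfSimilar N B μ) (x : ℝ) :
    measureFourier μ x = mask B (x / N) * measureFourier μ (x / N) := by
  have hbranch (b : ℤ) : ∫ t, expFun x t ∂μ.map (fun t : ℝ => (t + (b : ℝ)) / (N : ℝ))
      = expFun b (x / N) * measureFourier μ (x / N) := by
    rw [integral_map (by fun_prop) (continuous_expFun x).aestronglyMeasurable, measureFourier,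
      ← integral_const_mul]
    refine integral_congr_ae (.of_forall fun t => ?_)
    simp only [expFun, ← Complex.exp_add]
    push_cast
    ring_nf
  conv_lhs => rw [measureFourier, hμ]
  rw [integral_smul_measure, integral_finsetSum_measure fun b _ =>
    (memLp_expFun _ 1 x).integrable le_rfl]
  simp only [hbranch, mask, ENNReal.toReal_inv, ENNReal.toReal_natCast, ← Finset.sum_mul,
    Complex.real_smul, mul_assoc]
  push_cast
  rfl

lemma IsSelfSimilar.measureFourier_eq_maskProd_mul [IsFiniteMeasure μ]
    (hμ : IsSelfSimilar N B μ) (n : ℕ) (x : ℝ) :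
    measureFourier μ x = maskProd N B n x * measureFourier μ (x / (N : ℝ) ^ n) := by
  induction n with
  | zero => simp [maskProd]
  | succ n ih =>
    rw [ih, hμ.measureFourier_eq_mask_mul, maskProd_add, maskProd_one, mul_assoc, div_div,
      ← pow_succ]

variable [IsProbabilityMeasure μ]

lemma measureFourier_zero : measureFourier μ 0 = 1 := by
  simp [measureFourier, expFun]

lemma norm_measureFourier_le_one (ξ : ℝ) : ‖measureFourier μ ξ‖ ≤ 1 := by
  simpa [measureFourier] using norm_integral_le_of_norm_le_const (μ := μ) (f := expFun ξ)
    (.of_forall fun t => (norm_expFun ξ t).le)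

lemma exists_measureFourier_div_pow_ne_zero (hN : 1 < N) {K : Set ℝ}
    (hK : Bornology.IsBounded K) :
    ∃ n : ℕ, ∀ x ∈ K, measureFourier μ (x / (N : ℝ) ^ n) ≠ 0 := by
  obtain ⟨R, hR⟩ := hK.exists_norm_le
  have hne : ∀ᶠ x in 𝓝 (0 : ℝ), measureFourier μ x ≠ 0 :=
    continuous_measureFourier.continuousAt.eventually_ne (by simp [measureFourier_zero])
  obtain ⟨r, hr, hball⟩ := Metric.eventually_nhds_iff.mp hne
  have hlim : Tendsto (fun n : ℕ => R / (N : ℝ) ^ n) atTop (𝓝 0) :=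
    (tendsto_pow_atTop_atTop_of_one_lt (by exact_mod_cast hN)).const_div_atTop R
  obtain ⟨n, hn⟩ := (hlim.eventually (gt_mem_nhds hr)).exists
  refine ⟨n, fun x hx => hball ?_⟩
  rw [dist_zero_right, norm_div, norm_pow, Real.norm_natCast]
  exact (div_le_div_of_nonneg_right (hR x hx) (by positivity)).trans_lt hn

namespace IsSelfSimilar

lemma maskProd_apply_zero (hμ : IsSelfSimilar N B μ) (n : ℕ) : maskProd N B n 0 = 1 := by
  simpa [measureFourier_zero] using (hμ.measureFourier_eq_maskProd_mul n 0).symm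

lemma tendsto_maskProd (hN : 1 < N) (hμ : IsSelfSimilar N B μ) {n : ℕ → ℕ}
    (hn : Tendsto n atTop atTop) (x : ℝ) :
    Tendsto (fun k => maskProd N B (n k) x) atTop (𝓝 (measureFourier μ x)) := by
  have hdiv : Tendsto (fun k => x / (N : ℝ) ^ n k) atTop (𝓝 0) :=
    ((tendsto_pow_atTop_atTop_of_one_lt (by exact_mod_cast hN)).const_div_atTop x).comp hn
  have htail : Tendsto (fun k => measureFourier μ (x / (N : ℝ) ^ n k)) atTop
      (𝓝 1) :=
    measureFourier_zero (μ := μ) ▸ (continuous_measureFourier.tendsto 0).comp hdiv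
  have hquot := (tendsto_const_nhds (x := measureFourier μ x)).div htail one_ne_zero
  rw [div_one] at hquot
  refine hquot.congr' ?_
  filter_upwards [htail.eventually_ne one_ne_zero] with k hk
  rw [Pi.div_apply, hμ.measureFourier_eq_maskProd_mul (n k) x, mul_div_cancel_right₀ _ hk]

lemma measureFourier_eq_zero_iff (hN : 1 < N) (hμ : IsSelfSimilar N B μ) (x : ℝ) :
    measureFourier μ x = 0 ↔ ∃ k : ℕ, mask B (x / (N : ℝ) ^ (k + 1)) = 0 := by
  refine ⟨fun h => ?_, fun ⟨k, hk⟩ => ?_⟩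
  · obtain ⟨n, hn⟩ := exists_measureFourier_div_pow_ne_zero (μ := μ) hN
      (Bornology.isBounded_singleton (x := x))
    rw [hμ.measureFourier_eq_maskProd_mul n] at h
    obtain ⟨k, -, hk⟩ :=
      Finset.prod_eq_zero_iff.mp ((mul_eq_zero.mp h).resolve_right (hn x rfl))
    exact ⟨k, hk⟩
  · rw [hμ.measureFourier_eq_maskProd_mul (k + 1), maskProd,
      Finset.prod_eq_zero (Finset.self_mem_range_succ k) hk, zero_mul]

lemma finite_zeros_measureFourier (hN : 1 < N) (hμ : IsSelfSimilar N B μ) {K : Set ℝ}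
    (hK : IsCompact K) : {x ∈ K | measureFourier μ x = 0}.Finite := by
  obtain ⟨n, hn⟩ := exists_measureFourier_div_pow_ne_zero (μ := μ) hN hK.isBounded
  by_contra hinf
  obtain ⟨x₀, -, hacc⟩ :=
    Set.Infinite.exists_accPt_of_subset_isCompact hinf hK (Set.sep_subset _ _)
  have hfreq : ∃ᶠ x in 𝓝[≠] x₀, maskProd N B n x = 0 := by
    refine (accPt_iff_frequently_nhdsNE.mp hacc).mono fun x hx => ?_
    have hzero := hx.2
    rw [hμ.measureFourier_eq_maskProd_mul n] at hzero
    exact (mul_eq_zero.mp hzero).resolve_right (hn x hx.1)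
  have hvanish := (analyticOnNhd_maskProd n).eqOn_zero_of_preconnected_of_frequently_eq_zero
    isPreconnected_univ (Set.mem_univ x₀) hfreq (Set.mem_univ (0 : ℝ))
  exact one_ne_zero ((hμ.maskProd_apply_zero n).symm.trans hvanish)

lemma measureFourier_mul_eq_zero_iff (hN : 1 < N) (hμ : IsSelfSimilar N B μ) {w : ℤ}
    (hw : IsCoprime w N) (c : ℤ) (i : ℕ) :
    measureFourier μ (w * (c / (N : ℝ) ^ i)) = 0 ↔ measureFourier μ (c / (N : ℝ) ^ i) = 0 := by
  rw [hμ.measureFourier_eq_zero_iff hN, hμ.measureFourier_eq_zero_iff hN]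
  refine exists_congr fun k => ?_
  have hpow : IsCoprime w ((N ^ (i + (k + 1)) : ℕ) : ℤ) := by
    exact_mod_cast hw.pow_right
  rw [mul_div_assoc, div_div, ← pow_add]
  exact_mod_cast mask_mul_eq_zero_iff (pow_ne_zero _ (by omega)) hpow c

end IsSelfSimilar

end FourierTransform

section IntegralZeros

/-- The integral periodic zero set of the Fourier transform of `μ`. -/
def integralZeros (μ : Measure ℝ) : Set ℝ :=
  {x | ∀ j : ℤ, measureFourier μ (x + j) = 0}

lemma add_intCast_mem_integralZeros {μ : Measure ℝ} {x : ℝ} (hx : x ∈ integralZeros μ) (k : ℤ) :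
    x + k ∈ integralZeros μ := by
  intro j
  rw [add_assoc]
  exact_mod_cast hx (k + j)

lemma fract_mem_integralZeros {μ : Measure ℝ} {x : ℝ} (hx : x ∈ integralZeros μ) :
    Int.fract x ∈ integralZeros μ := by
  simpa [Int.fract, sub_eq_add_neg] using add_intCast_mem_integralZeros hx (-⌊x⌋)

variable {N : ℕ} {B L : Finset ℤ} {μ : Measure ℝ}

lemma exists_add_intCast_div_mem_integralZeros [IsFiniteMeasure μ] (h : IsHadamardTriple N B L)
    (hμ : IsSelfSimilar N B μ) {x : ℝ} (hx : x ∈ integralZeros μ) :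
    ∃ l : ℤ, (x + l) / N ∈ integralZeros μ := by
  obtain ⟨l, -, hl⟩ : ∃ l ∈ L, mask B ((x + l) / N) ≠ 0 := by
    by_contra! hzero
    have hsum := h.isLevelSpectrum isCoprime_one_left x
    rw [Finset.sum_eq_zero fun l hl => by simp [maskProd_one, hzero l hl]] at hsum
    exact zero_ne_one hsum
  refine ⟨l, fun j => ?_⟩
  have hN : (N : ℝ) ≠ 0 := by exact_mod_cast h.ne_zero
  have hshift : (x + (l + N * j : ℤ)) / N = (x + l) / N + j := by
    push_cast
    field_simp
    ring
  have hrec := hμ.measureFourier_eq_mask_mul (x + (l + N * j : ℤ))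
  rw [hx, hshift, mask_add_intCast] at hrec
  exact (mul_eq_zero.mp hrec.symm).resolve_left hl

variable [IsProbabilityMeasure μ]

-- `x ↦ N x` maps the finite set `integralZeros μ / ℤ` onto a superset of itself.
lemma natCast_mul_mem_integralZeros (h : IsHadamardTriple N B L) (hμ : IsSelfSimilar N B μ)
    {x : ℝ} (hx : x ∈ integralZeros μ) : N * x ∈ integralZeros μ := by
  have hN : (N : ℝ) ≠ 0 := by exact_mod_cast h.ne_zero
  let T (x : ℝ) : ℝ := Int.fract (N * x)
  have hT (x : ℝ) : T (Int.fract x) = T x :=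
    Int.fract_eq_fract.mpr ⟨-(N * ⌊x⌋), by push_cast; rw [← Int.self_sub_floor]; ring⟩
  let F : Set ℝ := {x ∈ integralZeros μ | x ∈ Set.Ico 0 1}
  have hfract {x : ℝ} (hx : x ∈ integralZeros μ) : Int.fract x ∈ F :=
    ⟨fract_mem_integralZeros hx, Int.fract_nonneg x, Int.fract_lt_one x⟩
  have hF : F.Finite := (hμ.finite_zeros_measureFourier h.1 isCompact_Icc).subset
    fun x hx => ⟨Set.Ico_subset_Icc_self hx.2, by simpa using hx.1 0⟩
  have hsub : F ⊆ T '' F := by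
    rintro x ⟨hxZ, hx01⟩
    obtain ⟨l, hl⟩ := exists_add_intCast_div_mem_integralZeros h hμ hxZ
    refine ⟨_, hfract hl, ?_⟩
    rw [hT]
    simp only [T]
    rw [mul_div_cancel₀ _ hN, Int.fract_add_intCast, Int.fract_eq_self.mpr hx01]
  have hmem : T x ∈ F := by
    rw [Set.eq_of_subset_of_ncard_le hsub (Set.ncard_image_le hF) (hF.image T), ← hT]
    exact Set.mem_image_of_mem T (hfract hx)
  simpa [T] using add_intCast_mem_integralZeros hmem.1 ⌊N * x⌋

lemma div_pow_notMem_integralZeros (h : IsHadamardTriple N B L) (hμ : IsSelfSimilar N B μ)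
    (a : ℤ) (i : ℕ) : a / (N : ℝ) ^ i ∉ integralZeros μ := by
  induction i with
  | zero =>
    intro ha
    simpa [measureFourier_zero] using ha (-a)
  | succ i ih =>
    intro ha
    have hN : (N : ℝ) ≠ 0 := by exact_mod_cast h.ne_zero
    refine ih ?_
    convert natCast_mul_mem_integralZeros h hμ ha using 1
    field_simp
    ring

lemma exists_measureFourier_mul_ne_zero (h : IsHadamardTriple N B L) (hμ : IsSelfSimilar N B μ)
    (a : ℤ) (i : ℕ) : ∃ j : ℤ, ∀ w : ℤ, IsCoprime w N →
      measureFourier μ (w * ((a + (N : ℤ) ^ i * j : ℤ) / (N : ℝ) ^ i)) ≠ 0 := by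
  have hN : (N : ℝ) ≠ 0 := by exact_mod_cast h.ne_zero
  obtain ⟨j, hj⟩ := not_forall.mp (div_pow_notMem_integralZeros h hμ a i)
  refine ⟨j, fun w hw => (hμ.measureFourier_mul_eq_zero_iff h.1 hw _ i).not.mpr ?_⟩
  convert hj using 2
  push_cast
  field_simp

end IntegralZeros

section Pigeonhole

lemma exists_pow_mul_lt_pow {a b : ℕ} (hab : a < b) (c : ℕ) : ∃ m : ℕ, a ^ m * c < b ^ m := by
  have hb : (0 : ℝ) < b := by exact_mod_cast (Nat.zero_le a).trans_lt hab
  obtain ⟨m, hm⟩ := exists_pow_lt_of_lt_one (by positivity : (0 : ℝ) < 1 / (c + 1))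
    ((div_lt_one hb).mpr (by exact_mod_cast hab : (a : ℝ) < b))
  rw [div_pow, div_lt_div_iff₀ (by positivity) (by positivity), one_mul] at hm
  exact ⟨m, (Nat.mul_le_mul_left _ c.le_succ).trans_lt (by exact_mod_cast hm)⟩

lemma exists_forall_fract_div_notMem {M : ℕ} {D : Finset ℤ} {E : Finset ℝ}
    (h : D.card * E.card < M) (y : ℝ) :
    ∃ t : ℤ, ∀ d ∈ D, Int.fract ((y + (t + d : ℤ)) / M) ∉ E := by
  by_contra! hcon
  choose f hfD hfE using hcon
  have hM : (M : ℝ) ≠ 0 := by exact_mod_cast (by omega : M ≠ 0)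
  obtain ⟨s, hs, s', hs', hne, heq⟩ := Finset.exists_ne_map_eq_of_card_lt_of_maps_to
    (s := Finset.range M) (t := D ×ˢ E) (by simpa using h)
    (f := fun s : ℕ => (f s, Int.fract ((y + ((s : ℤ) + f s : ℤ)) / M)))
    fun s _ => Finset.mem_coe.mpr (Finset.mem_product.mpr ⟨hfD s, hfE s⟩)
  obtain ⟨hf, hfract⟩ := Prod.mk.inj heq
  rw [hf, Int.fract_eq_fract] at hfract
  obtain ⟨z, hz⟩ := hfract
  have hmod : (s : ℤ) - s' = M * z := by
    have : (s : ℝ) - s' = M * z := by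
      rw [← hz]
      push_cast
      field_simp
      ring
    exact_mod_cast this
  refine hne (Nat.ModEq.eq_of_lt_of_lt (m := M) ?_ (Finset.mem_range.mp hs)
    (Finset.mem_range.mp hs'))
  exact Int.natCast_modEq_iff.mp (Int.modEq_iff_dvd.mpr ⟨-z, by linarith⟩)

end Pigeonhole

section Nonvanishing

variable {N : ℕ} {B L : Finset ℤ} {μ : Measure ℝ} [IsProbabilityMeasure μ] {W : Finset ℤ}

lemma ne_zero_of_isCoprime_natCast (hN : 1 < N) {w : ℤ} (hw : IsCoprime w N) : w ≠ 0 := by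
  rintro rfl
  have := Int.isUnit_iff_natAbs_eq.mp (isCoprime_zero_left.mp hw)
  omega

lemma IsLevelSpectrum.add_pow_mul {w : ℤ} {n : ℕ} {D : Finset ℤ} (hN : N ≠ 0) (hB : B.Nonempty)
    (h : IsLevelSpectrum N B w n D) (j : ℤ → ℤ) :
    IsLevelSpectrum N B w n (extendDigits N n D fun d => {j d}) :=
  h.extend hN hB (m := 0) fun _ _ => .singleton _

lemma IsSelfSimilar.finite_zeros_dilates (hN : 1 < N) (hμ : IsSelfSimilar N B μ)
    (hW : ∀ w ∈ W, w ≠ 0) {K : Set ℝ} (hK : IsCompact K) :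
    {x ∈ K | ∃ w ∈ W, measureFourier μ (w * x) = 0}.Finite := by
  have hfin : (⋃ w ∈ W, {x ∈ K | measureFourier μ (w * x) = 0}).Finite := by
    refine Set.Finite.biUnion W.finite_toSet fun w hw => ?_
    have hw0 : (w : ℝ) ≠ 0 := by exact_mod_cast hW w hw
    refine Set.Finite.subset ((hμ.finite_zeros_measureFourier hN
      (hK.image (continuous_const_mul (w : ℝ)))).preimage (mul_right_injective₀ hw0).injOn) ?_
    exact fun x hx => ⟨Set.mem_image_of_mem _ hx.1, hx.2⟩
  refine hfin.subset fun x hx => ?_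
  obtain ⟨hxK, w, hw, hzero⟩ := hx
  exact Set.mem_biUnion hw ⟨hxK, hzero⟩

lemma exists_isLevelSpectrum_zero_mem (h : IsHadamardTriple N B L) (hμ : IsSelfSimilar N B μ)
    (m : ℕ) : ∃ D : Finset ℤ, 0 ∈ D ∧ ∀ w : ℤ, IsCoprime w N →
      IsLevelSpectrum N B w m D ∧ ∀ d ∈ D, measureFourier μ (w * (d / (N : ℝ) ^ m)) ≠ 0 := by
  obtain ⟨D, hD0, -, hD⟩ := h.exists_isLevelSpectrum m
  choose j hj using fun a : ℤ => exists_measureFourier_mul_ne_zero h hμ a m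
  refine ⟨extendDigits N m D fun d => {if d = 0 then 0 else j d}, ?_, fun w hw =>
    ⟨(hD w hw).add_pow_mul h.ne_zero h.nonempty _, fun d' hd' => ?_⟩⟩
  · exact mem_extendDigits.mpr ⟨0, hD0, 0, by simp⟩
  · obtain ⟨d, -, e, he, rfl⟩ := mem_extendDigits.mp hd'
    rw [Finset.mem_singleton.mp he]
    split_ifs with hd
    · simp [hd, measureFourier_zero]
    · exact hj d w hw

lemma exists_forall_exists_isLevelSpectrum (h : IsHadamardTriple N B L) (hBN : B.card < N)
    (hμ : IsSelfSimilar N B μ) (hW : ∀ w ∈ W, IsCoprime w N) :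
    ∃ m : ℕ, ∀ y : ℝ, ∃ D : Finset ℤ, ∀ w ∈ W, IsLevelSpectrum N B w m D ∧
      ∀ d ∈ D, measureFourier μ (w * ((y + d) / (N : ℝ) ^ m)) ≠ 0 := by
  have hN : (N : ℝ) ≠ 0 := by exact_mod_cast h.ne_zero
  have hW0 : ∀ w ∈ W, w ≠ 0 := fun w hw => ne_zero_of_isCoprime_natCast h.1 (hW w hw)
  let E := (hμ.finite_zeros_dilates h.1 hW0 (isCompact_Icc (a := 0) (b := 1))).toFinset
  obtain ⟨m, hm⟩ := exists_pow_mul_lt_pow hBN E.card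
  obtain ⟨D, -, hcard, hD⟩ := h.exists_isLevelSpectrum m
  refine ⟨m, fun y => ?_⟩
  obtain ⟨t, ht⟩ := exists_forall_fract_div_notMem
    ((Nat.mul_le_mul_right _ hcard).trans_lt hm) y
  let j (d : ℤ) : ℤ := -⌊(y + d) / (N : ℝ) ^ m⌋
  refine ⟨extendDigits N m (extendDigits N 0 {t} fun _ => D) fun d => {j d}, fun w hw =>
    ⟨((hD w (hW w hw)).translate h.ne_zero h.nonempty t).add_pow_mul h.ne_zero h.nonempty j,
      fun d' hd' hzero => ?_⟩⟩
  obtain ⟨s, hs, e, he, rfl⟩ := mem_extendDigits.mp hd'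
  obtain ⟨t', ht', d, hd, rfl⟩ := mem_extendDigits.mp hs
  rw [Finset.mem_singleton] at he ht'
  subst he ht'
  refine ht d hd ((Set.Finite.mem_toFinset _).mpr ⟨⟨Int.fract_nonneg _, (Int.fract_lt_one _).le⟩,
    w, hw, ?_⟩)
  rw [← hzero, Int.fract]
  simp only [j]
  congr 2
  push_cast
  field_simp
  ring

end Nonvanishing

section EquiPositivity

open Filter Topology

/-- The Fourier transform of `μ` is bounded below by `ρ` on the interval of radius `ρ` around `x`;
the radius and the bound are the same number so that the condition has a single parameter. -/
def BoundedBelowNear (μ : Measure ℝ) (ρ x : ℝ) : Prop :=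
  ∀ η : ℝ, |η| ≤ ρ → ρ ≤ ‖measureFourier μ (x + η)‖

/-- Simultaneously for all `w ∈ W`, `w • D` is a spectrum of the `m`-th approximation of `μ_{N,B}`
and the Fourier transform of `μ` is bounded below near the points `w (y + d) / N ^ m`, `d ∈ D`. -/
def IsEquipositive (N : ℕ) (B : Finset ℤ) (μ : Measure ℝ) (W : Finset ℤ) (m : ℕ) (ρ y : ℝ)
    (D : Finset ℤ) : Prop :=
  ∀ w ∈ W, IsLevelSpectrum N B w m D ∧
    ∀ d ∈ D, BoundedBelowNear μ ρ (w * ((y + d) / (N : ℝ) ^ m))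

variable {N : ℕ} {B L : Finset ℤ} {μ : Measure ℝ} {W : Finset ℤ}

lemma eventually_boundedBelowNear [IsFiniteMeasure μ] {x : ℝ} (hx : measureFourier μ x ≠ 0) :
    ∀ᶠ p : ℝ × ℝ in 𝓝[>] 0 ×ˢ 𝓝 x, BoundedBelowNear μ p.1 p.2 := by
  have hhalf : ‖measureFourier μ x‖ / 2 < ‖measureFourier μ x‖ := half_lt_self (norm_pos_iff.mpr hx)
  obtain ⟨r, hr, hball⟩ := Metric.eventually_nhds_iff.mp
    (continuous_measureFourier.norm.continuousAt.eventually (lt_mem_nhds hhalf))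
  have hρ : ∀ᶠ ρ in 𝓝[>] (0 : ℝ), ρ < min (‖measureFourier μ x‖ / 2) (r / 2) :=
    nhdsWithin_le_nhds (gt_mem_nhds (by positivity))
  filter_upwards [hρ.prod_mk (Metric.ball_mem_nhds x (half_pos hr))] with ⟨ρ, z⟩ ⟨hρ, hz⟩ η hη
  obtain ⟨hρnorm, hρr⟩ := lt_min_iff.mp hρ
  refine (hρnorm.trans (hball ?_)).le
  calc dist (z + η) x ≤ dist (z + η) z + dist z x := dist_triangle _ _ _
    _ < r / 2 + r / 2 := add_lt_add (by simpa using hη.trans_lt hρr) hz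
    _ = r := add_halves r

namespace IsEquipositive

variable {m n : ℕ} {ρ y : ℝ} {D G : Finset ℤ}

lemma extend (hN : N ≠ 0) (hB : B.Nonempty) (hG : ∀ w ∈ W, IsLevelSpectrum N B w n G)
    {D : ℤ → Finset ℤ} (hD : ∀ g ∈ G, IsEquipositive N B μ W m ρ ((y + g) / (N : ℝ) ^ n) (D g)) :
    IsEquipositive N B μ W (n + m) ρ y (extendDigits N n G D) := by
  refine fun w hw => ⟨(hG w hw).extend hN hB fun g hg => (hD g hg w hw).1, fun x hx => ?_⟩
  obtain ⟨g, hg, d, hd, rfl⟩ := mem_extendDigits.mp hx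
  convert (hD g hg w hw).2 d hd using 2
  have : (N : ℝ) ≠ 0 := by exact_mod_cast hN
  push_cast
  field_simp
  ring

lemma translate (hN : N ≠ 0) (hB : B.Nonempty) {t : ℤ} (h : IsEquipositive N B μ W m ρ (y + t) D) :
    IsEquipositive N B μ W m ρ y (extendDigits N 0 {t} fun _ => D) := by
  simpa using extend (n := 0) (G := {t}) hN hB (fun _ _ => .singleton t) (D := fun _ => D)
    (by simpa using h)

lemma eventually [IsFiniteMeasure μ] (hD : ∀ w ∈ W, IsLevelSpectrum N B w m D ∧
      ∀ d ∈ D, measureFourier μ (w * ((y + d) / (N : ℝ) ^ m)) ≠ 0) :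
    ∀ᶠ p : ℝ × ℝ in 𝓝[>] 0 ×ˢ 𝓝 y, IsEquipositive N B μ W m p.1 p.2 D := by
  have hnear : ∀ w ∈ W, ∀ d ∈ D, ∀ᶠ p : ℝ × ℝ in 𝓝[>] 0 ×ˢ 𝓝 y,
      BoundedBelowNear μ p.1 (w * ((p.2 + d) / (N : ℝ) ^ m)) := by
    intro w hw d hd
    have hcont : Continuous fun z : ℝ => (w : ℝ) * ((z + d) / (N : ℝ) ^ m) := by fun_prop
    exact (tendsto_id.prodMap (hcont.tendsto y)).eventually
      (eventually_boundedBelowNear ((hD w hw).2 d hd))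
  filter_upwards [W.eventually_all.mpr fun w hw => D.eventually_all.mpr (hnear w hw)]
    with p hp w hw
  exact ⟨(hD w hw).1, hp w hw⟩

end IsEquipositive

variable [IsProbabilityMeasure μ]

lemma exists_eventually_isEquipositive (h : IsHadamardTriple N B L) (hBN : B.card < N)
    (hμ : IsSelfSimilar N B μ) (hW : ∀ w ∈ W, IsCoprime w N) :
    ∃ m : ℕ, ∀ y : ℝ, ∀ᶠ p : ℝ × ℝ in 𝓝[>] 0 ×ˢ 𝓝 y,
      ∃ D : Finset ℤ, IsEquipositive N B μ W m p.1 p.2 D ∧ (|p.2| ≤ p.1 → 0 ∈ D) := by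
  obtain ⟨m, hm⟩ := exists_forall_exists_isLevelSpectrum h hBN hμ hW
  refine ⟨m, fun y => ?_⟩
  obtain rfl | hy := eq_or_ne y 0
  · obtain ⟨D, hD0, hD⟩ := exists_isLevelSpectrum_zero_mem h hμ m
    filter_upwards [IsEquipositive.eventually fun w hw => by simpa using hD w (hW w hw)] with p hp
    exact ⟨D, hp, fun _ => hD0⟩
  · obtain ⟨D, hD⟩ := hm y
    have hfar : ∀ᶠ p : ℝ × ℝ in 𝓝[>] 0 ×ˢ 𝓝 y, p.1 < |p.2| := by
      have hle : 𝓝[>] (0 : ℝ) ×ˢ 𝓝 y ≤ 𝓝 (0, y) := by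
        rw [nhds_prod_eq]
        exact prod_mono_left _ nhdsWithin_le_nhds
      exact hle ((continuous_fst.tendsto _).eventually_lt (continuous_snd.abs.tendsto _)
        (abs_pos.mpr hy))
    filter_upwards [IsEquipositive.eventually hD, hfar] with p hp hlt
    exact ⟨D, hp, fun hle => absurd hle hlt.not_ge⟩

lemma exists_forall_isEquipositive (h : IsHadamardTriple N B L) (hBN : B.card < N)
    (hμ : IsSelfSimilar N B μ) (hW : ∀ w ∈ W, IsCoprime w N) :
    ∃ m : ℕ, ∃ ρ > 0, ∀ y : ℝ,
      ∃ D : Finset ℤ, IsEquipositive N B μ W m ρ y D ∧ (|y| ≤ ρ → 0 ∈ D) := by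
  obtain ⟨m, hm⟩ := exists_eventually_isEquipositive h hBN hμ hW
  have hcompact : ∀ᶠ ρ in 𝓝[>] (0 : ℝ), ∀ y ∈ Set.Icc (-1 : ℝ) 1,
      ∃ D : Finset ℤ, IsEquipositive N B μ W m ρ y D ∧ (|y| ≤ ρ → 0 ∈ D) :=
    (Eventually.curry (isCompact_Icc.mem_prod_nhdsSet_of_forall fun y _ => hm y)).mono
      fun _ hρ => hρ.self_of_nhdsSet
  have hlt : ∀ᶠ ρ in 𝓝[>] (0 : ℝ), ρ < 1 := nhdsWithin_le_nhds (gt_mem_nhds one_pos)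
  obtain ⟨ρ, hρ, hρ1, hρ0⟩ := (hcompact.and (hlt.and self_mem_nhdsWithin)).exists
  refine ⟨m, ρ, hρ0, fun y => ?_⟩
  by_cases hy : |y| ≤ ρ
  · exact hρ y (abs_le.mp (hy.trans hρ1.le))
  · obtain ⟨D, hD, -⟩ := hρ (Int.fract y)
      ⟨by linarith [Int.fract_nonneg y], (Int.fract_lt_one y).le⟩
    refine ⟨_, IsEquipositive.translate (t := -⌊y⌋) h.ne_zero h.nonempty
      (by simpa [Int.fract, sub_eq_add_neg] using hD), fun hle => absurd hle hy⟩

end EquiPositivity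

section Tower

open Filter Topology

variable {N : ℕ} {B L : Finset ℤ} {μ : Measure ℝ} [IsProbabilityMeasure μ] {W : Finset ℤ}

lemma IsHadamardTriple.exists_superset_isLevelSpectrum_div_pow_le (h : IsHadamardTriple N B L)
    (hW : ∀ w ∈ W, IsCoprime w N) {n : ℕ} {G : Finset ℤ}
    (hG : ∀ w ∈ W, IsLevelSpectrum N B w n G) {ρ : ℝ} (hρ : 0 < ρ) :
    ∃ n' > n, ∃ G' ⊇ G, (∀ w ∈ W, IsLevelSpectrum N B w n' G') ∧
      ∀ g ∈ G, |(g : ℝ) / (N : ℝ) ^ n'| ≤ ρ := by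
  have hlim (g : ℤ) : ∀ᶠ k in atTop, |(g : ℝ) / (N : ℝ) ^ k| ≤ ρ := by
    have hdiv := (tendsto_pow_atTop_atTop_of_one_lt (r := (N : ℝ))
      (by exact_mod_cast h.1)).const_div_atTop (g : ℝ)
    exact (hdiv.abs.eventually (gt_mem_nhds (by simpa using hρ))).mono fun _ hk => hk.le
  obtain ⟨k, hnk, hk⟩ :=
    ((eventually_gt_atTop n).and (G.eventually_all.mpr fun g _ => hlim g)).exists
  obtain ⟨r, rfl⟩ := Nat.exists_eq_add_of_le hnk.le
  obtain ⟨D, hD0, -, hD⟩ := h.exists_isLevelSpectrum r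
  refine ⟨n + r, hnk, extendDigits N n G fun _ => D, fun g hg => ?_, fun w hw =>
    (hG w hw).extend h.ne_zero h.nonempty fun _ _ => hD w (hW w hw), hk⟩
  exact mem_extendDigits.mpr ⟨g, hg, 0, hD0, by simp⟩

lemma exists_superset_isEquipositive (h : IsHadamardTriple N B L) (hBN : B.card < N)
    (hμ : IsSelfSimilar N B μ) (hW : ∀ w ∈ W, IsCoprime w N) :
    ∃ ρ > 0, ∀ (n : ℕ) (G : Finset ℤ), (∀ w ∈ W, IsLevelSpectrum N B w n G) →
      ∃ n' > n, ∃ G' ⊇ G, IsEquipositive N B μ W n' ρ 0 G' := by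
  obtain ⟨m, ρ, hρ, hlocal⟩ := exists_forall_isEquipositive h hBN hμ hW
  refine ⟨ρ, hρ, fun n G hG => ?_⟩
  obtain ⟨n₁, hn₁, G₁, hGG₁, hG₁, hsmall⟩ :=
    h.exists_superset_isLevelSpectrum_div_pow_le hW hG hρ
  choose D hD hD0 using fun g : ℤ => hlocal ((0 + g) / (N : ℝ) ^ n₁)
  refine ⟨n₁ + m, by omega, extendDigits N n₁ G₁ D, fun g hg => ?_,
    IsEquipositive.extend h.ne_zero h.nonempty hG₁ fun g _ => hD g⟩
  exact mem_extendDigits.mpr ⟨g, hGG₁ hg, 0, hD0 g (by simpa using hsmall g hg), by simp⟩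

lemma exists_isEquipositive_tower (h : IsHadamardTriple N B L) (hBN : B.card < N)
    (hμ : IsSelfSimilar N B μ) (hW : ∀ w ∈ W, IsCoprime w N) :
    ∃ ρ > 0, ∃ n : ℕ → ℕ, ∃ G : ℕ → Finset ℤ, StrictMono n ∧ Monotone G ∧
      ∀ k, IsEquipositive N B μ W (n k) ρ 0 (G k) := by
  obtain ⟨ρ, hρ, hstep⟩ := exists_superset_isEquipositive h hBN hμ hW
  let Stage := {p : ℕ × Finset ℤ // IsEquipositive N B μ W p.1 ρ 0 p.2}
  have hnext (p : Stage) : ∃ q : Stage, p.1.1 < q.1.1 ∧ p.1.2 ⊆ q.1.2 := by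
    obtain ⟨n, hn, G, hG, hequi⟩ := hstep p.1.1 p.1.2 fun w hw => (p.2 w hw).1
    exact ⟨⟨(n, G), hequi⟩, hn, hG⟩
  choose next hn hG using hnext
  obtain ⟨n₀, -, G₀, -, hG₀⟩ := hstep 0 {0} fun w _ => .singleton 0
  let stage (k : ℕ) : Stage := next^[k] ⟨(n₀, G₀), hG₀⟩
  have hsucc (k : ℕ) : stage (k + 1) = next (stage k) := Function.iterate_succ_apply' _ _ _
  exact ⟨ρ, hρ, fun k => (stage k).1.1, fun k => (stage k).1.2,
    strictMono_nat_of_lt_succ fun k => hsucc k ▸ hn _,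
    monotone_nat_of_le_succ fun k => hsucc k ▸ hG _, fun k => (stage k).2⟩

end Tower

section Frame

open Filter Topology

lemma hasSum_iUnion_of_dominated {κ α : Type*} [Preorder κ] [IsDirectedOrder κ] [Nonempty κ]
    {G : κ → Finset α} (hG : Monotone G) {f : α → ℝ} {a : κ → α → ℝ} {c C S : ℝ}
    (hf : ∀ g, 0 ≤ f g) (hC : 0 ≤ C) (hc : ∀ k, ∑ g ∈ G k, f g ≤ c) (hS : ∀ k, ∑ g ∈ G k, a k g = S)
    (hlim : ∀ g, Tendsto (a · g) atTop (𝓝 (f g)))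
    (hbound : ∀ᶠ k in atTop, ∀ g ∈ G k, ‖a k g‖ ≤ C * f g) :
    HasSum (fun g : ⋃ k, (G k : Set α) => f g) S := by
  classical
  have hmem (g : ⋃ k, (G k : Set α)) : ∀ᶠ k in atTop, (g : α) ∈ G k := by
    obtain ⟨k₀, hk₀⟩ := Set.mem_iUnion.mp g.2
    exact (eventually_ge_atTop k₀).mono fun k hk => hG hk hk₀
  have hsum : Summable fun g : ⋃ k, (G k : Set α) => f g := by
    refine summable_of_sum_le (c := c) (fun g => hf g) fun s => ?_
    obtain ⟨k, hk⟩ := (s.eventually_all.mpr fun g _ => hmem g).exists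
    calc ∑ g ∈ s, f g = ∑ g ∈ s.map (.subtype _), f g := by simp
      _ ≤ ∑ g ∈ G k, f g := Finset.sum_le_sum_of_subset_of_nonneg
          (by simpa [Finset.subset_iff] using hk) fun g _ _ => hf g
      _ ≤ c := hc k
  let ind (k : κ) (g : ⋃ k, (G k : Set α)) : ℝ := (G k : Set α).indicator (a k) g
  have hind (k : κ) : ∑' g, ind k g = S := by
    have hsub : (G k : Set α) ⊆ ⋃ k, (G k : Set α) := Set.subset_iUnion (fun k => (G k : Set α)) k
    rw [tsum_subtype (⋃ k, (G k : Set α)) ((G k : Set α).indicator (a k)),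
      Set.indicator_indicator, Set.inter_eq_right.mpr hsub, ← hS k, ← tsum_subtype]
    exact Finset.tsum_subtype' (G k) (a k)
  have hindlim (g : ⋃ k, (G k : Set α)) : Tendsto (ind · g) atTop (𝓝 (f g)) :=
    (hlim g).congr' ((hmem g).mono fun k hk => (Set.indicator_of_mem hk (a k)).symm)
  have hindbound : ∀ᶠ k in atTop, ∀ g, ‖ind k g‖ ≤ C * f g := by
    filter_upwards [hbound] with k hk g
    rw [norm_indicator_eq_indicator_norm]
    exact Set.indicator_le' (fun g hg => hk g hg) (fun g _ => mul_nonneg hC (hf g)) g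
  have hdom := tendsto_tsum_of_dominated_convergence (hsum.mul_left C) hindlim hindbound
  simp only [hind] at hdom
  exact tendsto_nhds_unique hdom tendsto_const_nhds ▸ hsum.hasSum

variable {N : ℕ} {B : Finset ℤ} {μ : Measure ℝ} {W : Finset ℤ}

lemma BoundedBelowNear.norm_maskProd_le [IsFiniteMeasure μ] (hμ : IsSelfSimilar N B μ)
    {ρ x ξ : ℝ} {n : ℕ}
    (h : BoundedBelowNear μ ρ (x / (N : ℝ) ^ n)) (hρ : 0 < ρ) (hξ : |ξ / (N : ℝ) ^ n| ≤ ρ) :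
    ‖maskProd N B n (ξ + x)‖ ≤ ρ⁻¹ * ‖measureFourier μ (ξ + x)‖ := by
  have hlower := h _ hξ
  rw [← add_div, add_comm] at hlower
  rw [hμ.measureFourier_eq_maskProd_mul n, norm_mul, inv_mul_eq_div, le_div_iff₀ hρ]
  exact mul_le_mul_of_nonneg_left hlower (norm_nonneg _)

variable [IsProbabilityMeasure μ]

lemma IsLevelSpectrum.sum_norm_sq_measureFourier_le_one (hμ : IsSelfSimilar N B μ) {w : ℤ} {n : ℕ}
    {G : Finset ℤ} (hG : IsLevelSpectrum N B w n G) (ξ : ℝ) :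
    ∑ g ∈ G, ‖measureFourier μ (ξ + w * g)‖ ^ 2 ≤ 1 := by
  rw [← hG ξ]
  refine Finset.sum_le_sum fun g _ => pow_le_pow_left₀ (norm_nonneg _) ?_ 2
  rw [hμ.measureFourier_eq_maskProd_mul n, norm_mul]
  exact mul_le_of_le_one_right (norm_nonneg _) (norm_measureFourier_le_one _)

lemma hasSum_norm_sq_measureFourier (hN : 1 < N) (hμ : IsSelfSimilar N B μ) {ρ : ℝ} (hρ : 0 < ρ)
    {n : ℕ → ℕ} (hn : Tendsto n atTop atTop) {G : ℕ → Finset ℤ} (hG : Monotone G)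
    (hequi : ∀ k, IsEquipositive N B μ W (n k) ρ 0 (G k)) {w : ℤ} (hw : w ∈ W) (ξ : ℝ) :
    HasSum (fun g : ⋃ k, (G k : Set ℤ) => ‖measureFourier μ (ξ + w * (g : ℤ))‖ ^ 2) 1 := by
  have hξ : Tendsto (fun k => |ξ / (N : ℝ) ^ n k|) atTop (𝓝 0) := by
    simpa using (((tendsto_pow_atTop_atTop_of_one_lt (r := (N : ℝ))
      (by exact_mod_cast hN)).const_div_atTop ξ).comp hn).abs
  refine hasSum_iUnion_of_dominated (C := ρ⁻¹ ^ 2) (c := 1)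
    (a := fun k g => ‖maskProd N B (n k) (ξ + w * g)‖ ^ 2)
    (f := fun g : ℤ => ‖measureFourier μ (ξ + w * g)‖ ^ 2) hG
    (fun g => by positivity) (by positivity)
    (fun k => (hequi k w hw).1.sum_norm_sq_measureFourier_le_one hμ ξ)
    (fun k => (hequi k w hw).1 ξ) (fun g => ((hμ.tendsto_maskProd hN hn _).norm.pow 2)) ?_
  filter_upwards [hξ.eventually_le_const hρ] with k hk g hg
  have hnear := (hequi k w hw).2 g hg
  rw [zero_add, ← mul_div_assoc] at hnear
  rw [norm_pow, norm_norm, ← mul_pow]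
  exact pow_le_pow_left₀ (norm_nonneg _) (hnear.norm_maskProd_le hμ hρ hk) 2

end Frame

section Totality

lemma charFun_eq_measureFourier (μ : Measure ℝ) (s : ℝ) :
    charFun μ s = measureFourier μ (s / (2 * Real.pi)) := by
  rw [charFun_apply_real, measureFourier]
  refine integral_congr_ae (.of_forall fun t => ?_)
  have : (Real.pi : ℂ) ≠ 0 := by exact_mod_cast Real.pi_ne_zero
  simp only [expFun]
  push_cast
  field_simp

lemma eq_of_forall_measureFourier_eq {μ ν : Measure ℝ} [IsFiniteMeasure μ] [IsFiniteMeasure ν]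
    (h : ∀ ξ, measureFourier μ ξ = measureFourier ν ξ) : μ = ν :=
  Measure.ext_of_charFun (funext fun s => by simp only [charFun_eq_measureFourier, h])

variable {μ : Measure ℝ}

lemma measureFourier_withDensity_ofReal {g : ℝ → ℝ} (hg : AEMeasurable g μ) (ξ : ℝ) :
    measureFourier (μ.withDensity fun t => ENNReal.ofReal (g t)) ξ =
      ∫ t, ((max (g t) 0 : ℝ) : ℂ) * expFun ξ t ∂μ := by
  rw [measureFourier,
    integral_withDensity_eq_integral_toReal_smul₀ hg.ennreal_ofReal (by simp)]
  simp only [ENNReal.toReal_ofReal', Complex.real_smul]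

lemma ae_eq_zero_of_forall_integral_ofReal_mul_expFun_eq_zero {g : ℝ → ℝ} (hg : Integrable g μ)
    (h : ∀ ξ, ∫ t, (g t : ℂ) * expFun ξ t ∂μ = 0) : g =ᵐ[μ] 0 := by
  have hmeas : AEMeasurable g μ := hg.aestronglyMeasurable.aemeasurable
  have hmeasneg : AEMeasurable (fun t => -g t) μ := hmeas.neg
  have hfin : ∫⁻ t, ENNReal.ofReal (g t) ∂μ ≠ ⊤ := hg.lintegral_lt_top.ne
  have := isFiniteMeasure_withDensity hfin
  have : IsFiniteMeasure (μ.withDensity fun t => ENNReal.ofReal (-g t)) :=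
    isFiniteMeasure_withDensity hg.neg.lintegral_lt_top.ne
  have hparts : (μ.withDensity fun t => ENNReal.ofReal (g t)) =
      μ.withDensity fun t => ENNReal.ofReal (-g t) := by
    refine eq_of_forall_measureFourier_eq fun ξ => ?_
    have hpos : Integrable (fun t => ((max (g t) 0 : ℝ) : ℂ) * expFun ξ t) μ :=
      integrable_mul_expFun hg.pos_part.ofReal ξ
    have hneg : Integrable (fun t => ((max (-g t) 0 : ℝ) : ℂ) * expFun ξ t) μ :=
      integrable_mul_expFun hg.neg_part.ofReal ξ
    rw [measureFourier_withDensity_ofReal hmeas, measureFourier_withDensity_ofReal hmeasneg,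
      ← sub_eq_zero, ← integral_sub hpos hneg, ← h ξ]
    simp only [← sub_mul, ← Complex.ofReal_sub, max_zero_sub_max_neg_zero_eq_self]
  filter_upwards [(withDensity_eq_iff hmeas.ennreal_ofReal hmeasneg.ennreal_ofReal hfin).mp hparts]
    with t ht
  rw [Pi.zero_apply, ← max_zero_sub_max_neg_zero_eq_self (g t), ← ENNReal.toReal_ofReal',
    ← ENNReal.toReal_ofReal', ht, sub_self]

lemma ae_eq_zero_of_forall_integral_mul_expFun_eq_zero {f : ℝ → ℂ} (hf : Integrable f μ)
    (h : ∀ ξ, ∫ t, f t * expFun ξ t ∂μ = 0) : f =ᵐ[μ] 0 := by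
  have hconj (ξ : ℝ) : ∫ t, (starRingEnd ℂ) (f t) * expFun ξ t ∂μ = 0 := by
    rw [← map_zero (starRingEnd ℂ), ← h (-ξ), ← integral_conj]
    simp only [map_mul, conj_expFun, neg_neg]
  have hint (ξ : ℝ) : Integrable (fun t => f t * expFun ξ t) μ := integrable_mul_expFun hf ξ
  have hintconj (ξ : ℝ) : Integrable (fun t => (starRingEnd ℂ) (f t) * expFun ξ t) μ :=
    integrable_mul_expFun (Complex.conjLIE.integrable_comp_iff.mpr hf) ξ
  have hre := ae_eq_zero_of_forall_integral_ofReal_mul_expFun_eq_zero hf.re fun ξ => by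
    simp only [RCLike.re_to_complex, Complex.re_eq_add_conj, div_mul_eq_mul_div, add_mul]
    rw [integral_div, integral_add (hint ξ) (hintconj ξ), h, hconj, add_zero, zero_div]
  have him := ae_eq_zero_of_forall_integral_ofReal_mul_expFun_eq_zero hf.im fun ξ => by
    simp only [RCLike.im_to_complex, Complex.im_eq_sub_conj, div_mul_eq_mul_div, sub_mul]
    rw [integral_div, integral_sub (hint ξ) (hintconj ξ), h, hconj, sub_zero, zero_div]
  filter_upwards [hre, him] with t hret himt
  exact Complex.ext hret himt

end Totality

section Hilbert

open Filter Topology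

variable {𝕜 E ι : Type*} [RCLike 𝕜] [NormedAddCommGroup E] [InnerProductSpace 𝕜 E] {v : ι → E}

lemma norm_sq_sub_sum_inner_smul (hv : Orthonormal 𝕜 v) (x : E) (s : Finset ι) :
    ‖x - ∑ i ∈ s, inner 𝕜 (v i) x • v i‖ ^ 2 = ‖x‖ ^ 2 - ∑ i ∈ s, ‖inner 𝕜 (v i) x‖ ^ 2 := by
  have hnorm : ‖∑ i ∈ s, inner 𝕜 (v i) x • v i‖ ^ 2 = ∑ i ∈ s, ‖inner 𝕜 (v i) x‖ ^ 2 := by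
    rw [← inner_self_eq_norm_sq (𝕜 := 𝕜), hv.inner_sum, map_sum]
    simp only [RCLike.conj_mul, ← RCLike.ofReal_pow, RCLike.ofReal_re]
  have hinner : RCLike.re (inner 𝕜 x (∑ i ∈ s, inner 𝕜 (v i) x • v i)) =
      ∑ i ∈ s, ‖inner 𝕜 (v i) x‖ ^ 2 := by
    simp only [inner_sum, map_sum, inner_smul_right]
    exact Finset.sum_congr rfl fun i _ => by
      rw [inner_mul_symm_re_eq_norm, norm_mul, norm_inner_symm x, sq]
  rw [norm_sub_sq (𝕜 := 𝕜), hnorm, hinner]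
  ring

lemma mem_topologicalClosure_span_of_hasSum (hv : Orthonormal 𝕜 v) {x : E}
    (hx : HasSum (fun i => ‖inner 𝕜 (v i) x‖ ^ 2) (‖x‖ ^ 2)) :
    x ∈ (Submodule.span 𝕜 (Set.range v)).topologicalClosure := by
  have herror : Tendsto (fun s : Finset ι => ‖x - ∑ i ∈ s, inner 𝕜 (v i) x • v i‖ ^ 2)
      atTop (𝓝 0) := by
    have hdefect := hx.const_sub (‖x‖ ^ 2)
    rw [sub_self] at hdefect
    exact hdefect.congr fun s => (norm_sq_sub_sum_inner_smul hv x s).symm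
  have happrox : Tendsto (fun s : Finset ι => ∑ i ∈ s, inner 𝕜 (v i) x • v i)
      atTop (𝓝 x) := by
    rw [tendsto_iff_norm_sub_tendsto_zero]
    simpa only [norm_sub_rev x, Real.sqrt_sq (norm_nonneg _), Real.sqrt_zero] using herror.sqrt
  exact mem_closure_of_tendsto happrox (.of_forall fun s => Submodule.sum_mem _ fun i _ =>
    Submodule.smul_mem _ _ (Submodule.subset_span (Set.mem_range_self i)))

end Hilbert

section Spectra

/-- The exponential `e_l` as an element of `L²(μ)`. -/
noncomputable def expLp (μ : Measure ℝ) [IsFiniteMeasure μ] (l : ℝ) : Lp ℂ 2 μ :=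
  (memLp_expFun μ 2 l).toLp

variable {μ : Measure ℝ}

section FiniteMeasure

variable [IsFiniteMeasure μ]

lemma coeFn_expLp (l : ℝ) : (expLp μ l : ℝ → ℂ) =ᵐ[μ] expFun l :=
  MemLp.coeFn_toLp _

lemma inner_expLp_left (l : ℝ) (f : Lp ℂ 2 μ) :
    inner ℂ (expLp μ l) f = ∫ t, f t * expFun (-l) t ∂μ := by
  rw [L2.inner_def]
  refine integral_congr_ae ((coeFn_expLp l).mono fun t ht => ?_)
  simp only [ht, RCLike.inner_apply, conj_expFun]

lemma inner_expLp_expLp (l m : ℝ) :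
    inner ℂ (expLp μ l) (expLp μ m) = measureFourier μ (m - l) := by
  rw [inner_expLp_left, measureFourier]
  refine integral_congr_ae ((coeFn_expLp m).mono fun t ht => ?_)
  simp only [ht, sub_eq_add_neg, expFun_add]

lemma topologicalClosure_span_range_expLp :
    (Submodule.span ℂ (Set.range (expLp μ))).topologicalClosure = ⊤ := by
  rw [Submodule.topologicalClosure_eq_top_iff, Submodule.eq_bot_iff]
  intro f hf
  refine Lp.eq_zero_iff_ae_eq_zero.mpr (ae_eq_zero_of_forall_integral_mul_expFun_eq_zero
    ((Lp.memLp f).integrable one_le_two) fun ξ => ?_)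
  rw [← neg_neg ξ, ← inner_expLp_left]
  exact Submodule.inner_right_of_mem_orthogonal (Submodule.subset_span (Set.mem_range_self (-ξ))) hf

end FiniteMeasure

variable [IsProbabilityMeasure μ] {Λ : Set ℝ}

lemma measureFourier_sub_eq_zero
    (hΛ : ∀ ξ, HasSum (fun l : Λ => ‖measureFourier μ (ξ + l)‖ ^ 2) 1) {l m : Λ} (hlm : l ≠ m) :
    measureFourier μ (m - l) = 0 := by
  classical
  have hpair := sum_le_hasSum {l, m} (fun _ _ => by positivity) (hΛ (-l))
  rw [Finset.sum_pair hlm, neg_add_cancel, measureFourier_zero, norm_one, neg_add_eq_sub] at hpair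
  exact norm_eq_zero.mp ((sq_nonpos_iff _).mp (by linarith))

-- The Jorgensen–Pedersen criterion.
lemma isSpectrum_of_forall_hasSum
    (hΛ : ∀ ξ, HasSum (fun l : Λ => ‖measureFourier μ (ξ + l)‖ ^ 2) 1) : IsSpectrum μ Λ := by
  classical
  have hortho : Orthonormal ℂ fun l : Λ => expLp μ l := by
    refine orthonormal_iff_ite.mpr fun l m => ?_
    rw [inner_expLp_expLp]
    split_ifs with hlm
    · rw [hlm, sub_self, measureFourier_zero]
    · exact measureFourier_sub_eq_zero hΛ hlm
  refine ⟨fun l => expLp μ l, fun l => coeFn_expLp (l : ℝ), hortho, top_le_iff.mp ?_⟩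
  rw [← topologicalClosure_span_range_expLp]
  refine Submodule.topologicalClosure_minimal _ (Submodule.span_le.mpr ?_)
    (Submodule.isClosed_topologicalClosure _)
  rintro _ ⟨ξ, rfl⟩
  refine mem_topologicalClosure_span_of_hasSum hortho ?_
  have hnorm : ‖expLp μ ξ‖ ^ 2 = 1 := by
    rw [← inner_self_eq_norm_sq (𝕜 := ℂ), inner_expLp_expLp, sub_self, measureFourier_zero,
      RCLike.one_re]
  rw [hnorm]
  convert hΛ (-ξ) using 3 with l
  rw [← norm_inner_symm, inner_expLp_expLp, neg_add_eq_sub]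

end Spectra

theorem spectral_eigenvalue_of_coprime_rational_general (N : ℕ) (B L : Finset ℤ)
    (h : IsHadamardTriple N B L) (hBN : B.card < N)
    (μ : Measure ℝ) [IsProbabilityMeasure μ] (hμ : IsSelfSimilar N B μ)
    (W : Finset ℤ) (hW : ∀ w ∈ W, IsCoprime w N) :
    ∃ Γ : Set ℤ, ∀ w ∈ W, IsSpectrum μ ((fun g : ℤ => (w : ℝ) * g) '' Γ) := by
  obtain ⟨ρ, hρ, n, G, hn, hG, hequi⟩ := exists_isEquipositive_tower h hBN hμ hW
  refine ⟨⋃ k, (G k : Set ℤ), fun w hw => isSpectrum_of_forall_hasSum fun ξ => ?_⟩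
  have hw0 : (w : ℝ) ≠ 0 := by exact_mod_cast ne_zero_of_isCoprime_natCast h.1 (hW w hw)
  have hinj : Function.Injective fun g : ℤ => (w : ℝ) * g :=
    (mul_right_injective₀ hw0).comp Int.cast_injective
  exact (Equiv.Set.image _ _ hinj).hasSum_iff.mp
    (hasSum_norm_sq_measureFourier h.1 hμ hρ hn.tendsto_atTop hG hequi hw ξ)

theorem spectral_eigenvalue_of_coprime_rational (N : ℕ) (B L : Finset ℤ)
    (h : IsHadamardTriple N B L) (hBN : B.card < N)
    (μ : Measure ℝ) [IsProbabilityMeasure μ]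
    (hμ : μ = (B.card : ℝ≥0∞)⁻¹ •
      ∑ b ∈ B, Measure.map (fun x : ℝ => (x + (b : ℝ)) / (N : ℝ)) μ)
    (u v : ℕ) (hu : 0 < u) (hv : 0 < v)
    (huv : Nat.Coprime u v) (hN : Nat.Coprime (u * v) N) :
    ∃ Λ : Set ℝ, IsSpectrum μ Λ ∧
      IsSpectrum μ ((fun x : ℝ => ((v : ℝ) / (u : ℝ)) * x) '' Λ) := by
  obtain ⟨Γ, hΓ⟩ := spectral_eigenvalue_of_coprime_rational_general N B L h hBN μ hμ {↑u, ↑v}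
    (by simpa [Nat.isCoprime_iff_coprime, Nat.coprime_mul_iff_left] using hN)
  exact ⟨_, hΓ u (by simp), by
    simpa [Set.image_image, ← mul_assoc, hu.ne'] using hΓ v (by simp)⟩
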